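/- Let p be a positive integer and suppose f(z) = ∑_{n=1}^∞ a_{pn} z^{pn} on 𝔻 (so the constant term vanishes). Then for every r with 0 ≤ r^p ≤ (5-√17)/2: ∑_{n=1}^∞ |a_{pn}| r^{pn} + (1/(1+|a_p|) + r^p/(1-r^p)) · ∑_{n=1}^∞ |a_{pn}|² r^{p(2n-1)} ≤ 1. -/

import Mathlib

/-!
Putting `w = z ^ p` turns `f` into a power series `w * g w` bounded by `1` on the unit disc, and the
Schwarz lemma gives `‖g‖ ≤ 1`. The coefficients of `g = ∑ bₙ wⁿ` satisfy Wiener's inequality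
`‖bₙ‖ ≤ 1 - ‖b₀‖²` for `n ≥ 1`: averaging `g` over the `n`-th roots of unity keeps the coefficients
`b₀, bₙ, b₂ₙ, …` and the bound, so it is enough to treat `n = 1`, which is the Schwarz–Pick
inequality at the origin. Comparing both sums with geometric series leaves a real inequality in
`x = r ^ p` and `‖b₀‖ ∈ [0, 1]`. It is tightest at `‖b₀‖ = 1`, where it becomes
`x ^ 2 - 5 * x + 2 ≥ 0`, and `(5 - √17) / 2` is the smaller root of this quadratic.
-/

section SchwarzPick

open Metric Set
open scoped ComplexConjugate

theorem norm_one_sub_conj_mul_sq_sub_norm_sub_sq (b u : ℂ) :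
    ‖1 - conj b * u‖ ^ 2 - ‖u - b‖ ^ 2 = (1 - ‖b‖ ^ 2) * (1 - ‖u‖ ^ 2) := by
  simp only [Complex.sq_norm, Complex.normSq_apply, Complex.sub_re, Complex.sub_im, Complex.mul_re,
    Complex.mul_im, Complex.conj_re, Complex.conj_im, Complex.one_re, Complex.one_im]
  ring

theorem one_sub_conj_mul_ne_zero {b u : ℂ} (hb : ‖b‖ < 1) (hu : ‖u‖ ≤ 1) :
    1 - conj b * u ≠ 0 := by
  refine sub_ne_zero.2 fun h => ?_
  have hlt : ‖conj b * u‖ < 1 := by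
    rw [norm_mul, Complex.norm_conj]
    exact mul_lt_one_of_nonneg_of_lt_one_left (norm_nonneg b) hb hu
  simp [← h] at hlt

theorem norm_sub_div_one_sub_conj_mul_le_one {b u : ℂ} (hb : ‖b‖ < 1) (hu : ‖u‖ ≤ 1) :
    ‖(u - b) / (1 - conj b * u)‖ ≤ 1 := by
  rw [norm_div, div_le_one (norm_pos_iff.2 (one_sub_conj_mul_ne_zero hb hu)),
    ← sq_le_sq₀ (norm_nonneg _) (norm_nonneg _), ← sub_nonneg,
    norm_one_sub_conj_mul_sq_sub_norm_sub_sq]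
  exact mul_nonneg (sub_nonneg.2 (pow_le_one₀ (norm_nonneg b) hb.le))
    (sub_nonneg.2 (pow_le_one₀ (norm_nonneg u) hu))

theorem hasDerivAt_sub_div_one_sub_conj_mul {G : ℂ → ℂ} {c : ℂ} (hG : DifferentiableAt ℂ G c)
    (hc : ‖G c‖ < 1) :
    HasDerivAt (fun w => (G w - G c) / (1 - conj (G c) * G w))
      (deriv G c / (1 - ‖G c‖ ^ 2 : ℝ)) c := by
  have hne := one_sub_conj_mul_ne_zero hc hc.le
  have hnorm : ((1 - ‖G c‖ ^ 2 : ℝ) : ℂ) = 1 - conj (G c) * G c := by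
    push_cast
    rw [Complex.conj_mul']
  refine ((hG.hasDerivAt.sub_const (G c)).div
    ((hG.hasDerivAt.const_mul (conj (G c))).const_sub 1) hne).congr_deriv ?_
  rw [hnorm, sub_self, zero_mul, sub_zero, sq, mul_div_mul_right _ _ hne]

theorem norm_deriv_le_one_sub_norm_sq_div {G : ℂ → ℂ} {c : ℂ} {R : ℝ} (hR : 0 < R)
    (hd : DifferentiableOn ℂ G (ball c R)) (hb : ∀ w ∈ ball c R, ‖G w‖ ≤ 1) :
    ‖deriv G c‖ ≤ (1 - ‖G c‖ ^ 2) / R := by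
  have hcR : c ∈ ball c R := mem_ball_self hR
  have hnhds : ball c R ∈ nhds c := ball_mem_nhds c hR
  rcases (hb c hcR).lt_or_eq with hlt | heq
  · set F : ℂ → ℂ := fun w => (G w - G c) / (1 - conj (G c) * G w)
    have hFd : DifferentiableOn ℂ F (ball c R) :=
      (hd.sub_const _).div ((hd.const_mul _).const_sub _) fun w hw =>
        one_sub_conj_mul_ne_zero hlt (hb w hw)
    have hFmaps : MapsTo F (ball c R) (closedBall (F c) 1) := fun w hw => by
      simpa [F] using norm_sub_div_one_sub_conj_mul_le_one hlt (hb w hw)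
    have hpos : 0 < 1 - ‖G c‖ ^ 2 := sub_pos.2 (pow_lt_one₀ (norm_nonneg _) hlt two_ne_zero)
    have hschwarz := Complex.norm_deriv_le_div_of_mapsTo_ball hFd hFmaps hR
    rwa [(hasDerivAt_sub_div_one_sub_conj_mul (hd.differentiableAt hnhds) hlt).deriv, norm_div,
      Complex.norm_of_nonneg hpos.le, div_le_iff₀ hpos, one_div_mul_eq_div] at hschwarz
  · have hmax : IsMaxOn (norm ∘ G) (ball c R) c := fun w hw => (hb w hw).trans_eq heq.symm
    have hconst : G =ᶠ[nhds c] Function.const ℂ (G c) :=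
      (Complex.eqOn_of_isPreconnected_of_isMaxOn_norm (convex_ball c R).isPreconnected isOpen_ball
        hd hcR hmax).eventuallyEq_of_mem hnhds
    have hderiv : deriv G c = 0 := hconst.deriv_eq.trans (deriv_const c (G c))
    simp [hderiv, heq]

end SchwarzPick

section PowerSeries

open Finset

section HasSum

variable {𝕜 : Type*} [RCLike 𝕜] {c : ℕ → 𝕜} {g : 𝕜 → 𝕜} {R : NNReal}

theorem hasFPowerSeriesOnBall_of_hasSum_pow (hR : 0 < R)
    (h : ∀ w : 𝕜, ‖w‖ < R → HasSum (fun n => c n * w ^ n) (g w)) :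
    HasFPowerSeriesOnBall g (FormalMultilinearSeries.ofScalars 𝕜 c) 0 R where
  r_le := by
    refine ENNReal.le_of_forall_nnreal_lt fun ρ hρ => ?_
    have hρR : ‖((ρ : ℝ) : 𝕜)‖ < R := by simpa using hρ
    refine FormalMultilinearSeries.le_radius_of_summable _ ?_
    simpa [FormalMultilinearSeries.ofScalars_norm] using (h _ hρR).summable.norm
  r_pos := by exact_mod_cast hR
  hasSum {w} hw := by
    have hwR : ‖w‖ < R := by simpa [Metric.eball_coe] using hw
    simpa [mul_comm] using h w hwR

theorem differentiableOn_ball_of_hasSum_pow (hR : 0 < R)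
    (h : ∀ w : 𝕜, ‖w‖ < R → HasSum (fun n => c n * w ^ n) (g w)) :
    DifferentiableOn 𝕜 g (Metric.ball 0 R) := by
  simpa only [Metric.eball_coe] using (hasFPowerSeriesOnBall_of_hasSum_pow hR h).differentiableOn

theorem apply_zero_of_hasSum_pow (hR : 0 < R)
    (h : ∀ w : 𝕜, ‖w‖ < R → HasSum (fun n => c n * w ^ n) (g w)) : g 0 = c 0 := by
  simpa using ((hasFPowerSeriesOnBall_of_hasSum_pow hR h).hasFPowerSeriesAt.coeff_zero 1).symm

theorem deriv_zero_of_hasSum_pow (hR : 0 < R)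
    (h : ∀ w : 𝕜, ‖w‖ < R → HasSum (fun n => c n * w ^ n) (g w)) : deriv g 0 = c 1 := by
  simpa using (hasFPowerSeriesOnBall_of_hasSum_pow hR h).hasFPowerSeriesAt.deriv

end HasSum

theorem sum_range_primitiveRoot_pow_pow {R : Type*} [CommRing R] [IsDomain R] {ζ : R} {n : ℕ}
    (hζ : IsPrimitiveRoot ζ n) (m : ℕ) :
    ∑ j ∈ range n, (ζ ^ j) ^ m = if n ∣ m then (n : R) else 0 := by
  simp only [← pow_mul, mul_comm _ m]
  simp only [pow_mul ζ m]
  split_ifs with h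
  · simp [(hζ.pow_eq_one_iff_dvd m).2 h]
  · have hne : 1 - ζ ^ m ≠ 0 := sub_ne_zero.2 fun h1 => h ((hζ.pow_eq_one_iff_dvd m).1 h1.symm)
    refine eq_zero_of_ne_zero_of_mul_left_eq_zero hne ?_
    rw [mul_neg_geom_sum, pow_right_comm, hζ.pow_eq_one, one_pow, sub_self]

theorem hasSum_multisection {𝕜 : Type*} [Field 𝕜] [TopologicalSpace 𝕜] [IsTopologicalRing 𝕜]
    {ζ w : 𝕜} {n : ℕ} (hn : (n : 𝕜) ≠ 0) (hζ : IsPrimitiveRoot ζ n) {c s : ℕ → 𝕜}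
    (h : ∀ j ∈ range n, HasSum (fun m => c m * (ζ ^ j * w) ^ m) (s j)) :
    HasSum (fun k => c (n * k) * w ^ (n * k)) ((∑ j ∈ range n, s j) / n) := by
  have hn0 : n ≠ 0 := by
    rintro rfl
    exact hn Nat.cast_zero
  have hterm (m : ℕ) : (∑ j ∈ range n, c m * (ζ ^ j * w) ^ m) / n
      = if n ∣ m then c m * w ^ m else 0 := by
    simp only [mul_pow, mul_left_comm (c m), ← sum_mul, sum_range_primitiveRoot_pow_pow hζ]
    split_ifs with hdvd
    · field_simp
    · simp
  have havg : HasSum (fun m => if n ∣ m then c m * w ^ m else 0) ((∑ j ∈ range n, s j) / n) := by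
    simpa only [hterm] using (hasSum_sum h).div_const (n : 𝕜)
  rw [← (mul_right_injective₀ hn0).hasSum_iff] at havg
  · simpa [Function.comp_def] using havg
  · intro m hm
    exact if_neg fun ⟨k, hk⟩ => hm ⟨k, hk.symm⟩

theorem tsum_mul_pow_le_of_forall_succ_le {b : ℕ → ℝ} {d x : ℝ} (hb0 : ∀ n, 0 ≤ b (n + 1))
    (hb : ∀ n, b (n + 1) ≤ d) (hx0 : 0 ≤ x) (hx1 : x < 1) :
    ∑' n, b n * x ^ n ≤ b 0 + d * (x / (1 - x)) := by
  have hgeom : HasSum (fun n : ℕ => d * x ^ (n + 1)) (d * (x / (1 - x))) := by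
    simpa only [pow_succ', div_eq_mul_inv] using
      ((hasSum_geometric_of_lt_one hx0 hx1).mul_left x).mul_left d
  have hle (n : ℕ) : b (n + 1) * x ^ (n + 1) ≤ d * x ^ (n + 1) := by gcongr; exact hb n
  have htail : Summable fun n => b (n + 1) * x ^ (n + 1) :=
    .of_nonneg_of_le (fun n => mul_nonneg (hb0 n) (by positivity)) hle hgeom.summable
  have hsum : Summable fun n => b n * x ^ n := (summable_nat_add_iff 1).1 htail
  rw [hsum.tsum_eq_zero_add, ← hgeom.tsum_eq, pow_zero, mul_one]
  gcongr
  · exact hgeom.summable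
  · exact hb _

end PowerSeries

/-- `c` is the coefficient sequence of a Schur function: `∑ cₙ wⁿ` converges on the open unit disc
to a function bounded by `1`. The sum is quantified pointwise, so that operations on `c` need not
name the function they produce. -/
def IsSchurSeq (c : ℕ → ℂ) : Prop :=
  ∀ w : ℂ, ‖w‖ < 1 → ∃ s, HasSum (fun n => c n * w ^ n) s ∧ ‖s‖ ≤ 1

namespace IsSchurSeq

open Metric Finset

variable {c : ℕ → ℂ}

theorem of_hasSum_pow_mul {p : ℕ} (hp : p ≠ 0)
    (h : ∀ z : ℂ, ‖z‖ < 1 → ∃ s, HasSum (fun n => c n * z ^ (p * n)) s ∧ ‖s‖ ≤ 1) :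
    IsSchurSeq c := by
  intro w hw
  obtain ⟨z, rfl⟩ := IsAlgClosed.exists_pow_nat_eq w hp.pos
  rw [norm_pow, pow_lt_one_iff_of_nonneg (norm_nonneg z) hp] at hw
  simpa only [pow_mul] using h z hw

theorem multisection (hc : IsSchurSeq c) {n : ℕ} (hn : n ≠ 0) :
    IsSchurSeq fun k => c (n * k) := by
  refine of_hasSum_pow_mul hn fun w hw => ?_
  choose! g hg hbound using hc
  have hζ := Complex.isPrimitiveRoot_exp n hn
  set ζ := Complex.exp (2 * Real.pi * Complex.I / n)
  have hrot (j : ℕ) : ‖ζ ^ j * w‖ < 1 := by simpa [hζ.norm'_eq_one hn] using hw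
  refine ⟨_, hasSum_multisection (Nat.cast_ne_zero.2 hn) hζ fun j _ => hg _ (hrot j), ?_⟩
  rw [norm_div, Complex.norm_natCast]
  refine div_le_one_of_le₀ ?_ n.cast_nonneg
  simpa using norm_sum_le_of_le (range n) fun j _ => hbound _ (hrot j)

theorem norm_one_le_one_sub_norm_zero_sq (hc : IsSchurSeq c) : ‖c 1‖ ≤ 1 - ‖c 0‖ ^ 2 := by
  choose! g hg hbound using hc
  rw [← apply_zero_of_hasSum_pow one_pos hg, ← deriv_zero_of_hasSum_pow one_pos hg]
  simpa using norm_deriv_le_one_sub_norm_sq_div one_pos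
    (differentiableOn_ball_of_hasSum_pow one_pos hg) fun w hw => hbound w (mem_ball_zero_iff.1 hw)

theorem norm_le_one_sub_norm_zero_sq (hc : IsSchurSeq c) {n : ℕ} (hn : n ≠ 0) :
    ‖c n‖ ≤ 1 - ‖c 0‖ ^ 2 := by
  simpa using (hc.multisection hn).norm_one_le_one_sub_norm_zero_sq

theorem norm_zero_le_one (hc : IsSchurSeq c) : ‖c 0‖ ≤ 1 := by
  have h := (norm_nonneg _).trans hc.norm_one_le_one_sub_norm_zero_sq
  exact (sq_le_one_iff₀ (norm_nonneg _)).1 (sub_nonneg.1 h)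

theorem tail (hc : IsSchurSeq c) (h0 : c 0 = 0) : IsSchurSeq fun n => c (n + 1) := by
  choose! g hg hbound using hc
  have hg0 : g 0 = 0 := (apply_zero_of_hasSum_pow one_pos hg).trans h0
  have hmaps : Set.MapsTo g (ball 0 1) (closedBall (g 0) 1) := fun w hw => by
    simpa [hg0] using hbound w (mem_ball_zero_iff.1 hw)
  intro w hw
  refine ⟨dslope g 0 w, ?_, ?_⟩
  · rcases eq_or_ne w 0 with rfl | hw0
    · rw [dslope_same, deriv_zero_of_hasSum_pow one_pos hg]
      simpa [mul_comm] using HasSum.hasSum_at_zero (𝕜 := ℂ) fun n => c (n + 1)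
    · have hshift : HasSum (fun n => c (n + 1) * w ^ (n + 1)) (g w) := by
        simpa [h0] using (hasSum_nat_add_iff' 1).2 (hg w hw)
      rw [dslope_of_ne _ hw0, slope_def_field, hg0, sub_zero, sub_zero]
      simpa [pow_succ, ← mul_assoc, hw0] using hshift.div_const w
  · simpa using Complex.norm_dslope_le_div_of_mapsTo_ball
      (differentiableOn_ball_of_hasSum_pow one_pos hg) hmaps (mem_ball_zero_iff.2 hw)

end IsSchurSeq

/-- The bound on the Bohr sum of a Schur sequence `b` at `x`, as a function of `t = ‖b 0‖`, that
results from estimating every `‖b n‖` with `n ≥ 1` by `1 - t ^ 2`. -/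
noncomputable def bohrMajorant (x t : ℝ) : ℝ :=
  x * (t + (1 - t ^ 2) * (x / (1 - x))) +
    (1 / (1 + t) + x / (1 - x)) *
      (x * (t ^ 2 + (1 - t ^ 2) ^ 2 * (x ^ 2 / (1 - x ^ 2))))

theorem IsSchurSeq.tsum_add_mul_tsum_le_bohrMajorant {b : ℕ → ℂ} (hb : IsSchurSeq b) {x : ℝ}
    (hx0 : 0 ≤ x) (hx1 : x < 1) :
    ∑' n, ‖b n‖ * x ^ (n + 1) +
        (1 / (1 + ‖b 0‖) + x / (1 - x)) * ∑' n, ‖b n‖ ^ 2 * x ^ (2 * n + 1) ≤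
      bohrMajorant x ‖b 0‖ := by
  have hcoeff (n : ℕ) : ‖b (n + 1)‖ ≤ 1 - ‖b 0‖ ^ 2 :=
    hb.norm_le_one_sub_norm_zero_sq n.succ_ne_zero
  have hsum : ∑' n, ‖b n‖ * x ^ n ≤ ‖b 0‖ + (1 - ‖b 0‖ ^ 2) * (x / (1 - x)) :=
    tsum_mul_pow_le_of_forall_succ_le (fun _ => norm_nonneg _) hcoeff hx0 hx1
  have hsumsq : ∑' n, ‖b n‖ ^ 2 * (x ^ 2) ^ n ≤
      ‖b 0‖ ^ 2 + (1 - ‖b 0‖ ^ 2) ^ 2 * (x ^ 2 / (1 - x ^ 2)) :=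
    tsum_mul_pow_le_of_forall_succ_le (b := fun n => ‖b n‖ ^ 2) (fun _ => sq_nonneg _)
      (fun n => pow_le_pow_left₀ (norm_nonneg _) (hcoeff n) 2)
      (sq_nonneg x) (pow_lt_one₀ hx0 hx1 two_ne_zero)
  have : 0 < 1 - x := sub_pos.2 hx1
  have hpow (n : ℕ) : ‖b n‖ * x ^ (n + 1) = x * (‖b n‖ * x ^ n) := by ring
  have hpowsq (n : ℕ) : ‖b n‖ ^ 2 * x ^ (2 * n + 1) = x * (‖b n‖ ^ 2 * (x ^ 2) ^ n) := by ring
  simp only [hpow, hpowsq, tsum_mul_left, bohrMajorant]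
  gcongr

theorem add_sq_div_one_add_add_le {t : ℝ} (ht0 : 0 ≤ t) (ht1 : t ≤ 1) :
    t + t ^ 2 / (1 + t) + (1 - t ^ 2) ^ 2 / 2 ≤ 3 / 2 := by
  have hcubic : (1 - t) * (1 + t) ^ 3 ≤ 3 + 4 * t := by
    nlinarith [pow_nonneg ht0 3, pow_nonneg ht0 4]
  have hdiff : 3 / 2 - (t + t ^ 2 / (1 + t) + (1 - t ^ 2) ^ 2 / 2) =
      (1 - t) * (3 + 4 * t - (1 - t) * (1 + t) ^ 3) / (2 * (1 + t)) := by
    field_simp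
    ring
  rw [← sub_nonneg, hdiff]
  exact div_nonneg (mul_nonneg (sub_nonneg.2 ht1) (sub_nonneg.2 hcubic)) (by positivity)

theorem bohrMajorant_le_bohrMajorant_one {x t : ℝ} (hx0 : 0 ≤ x) (hx : x ≤ 4 / 9) (ht0 : 0 ≤ t)
    (ht1 : t ≤ 1) : bohrMajorant x t ≤ bohrMajorant x 1 := by
  have h1x : 0 < 1 - x := by linarith
  have h1x2 : 0 < 1 - x ^ 2 := by nlinarith
  have hfactor : 1 / (1 + t) + x / (1 - x) ≤ 1 / (1 - x) :=
    calc 1 / (1 + t) + x / (1 - x) ≤ 1 + x / (1 - x) := by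
          gcongr
          exact div_le_one_of_le₀ (by linarith) (by linarith)
      _ = 1 / (1 - x) := by field_simp; ring
  have hhalf : 1 / (1 - x) * (x ^ 2 / (1 - x ^ 2)) ≤ 1 / 2 := by
    rw [div_mul_div_comm, div_le_div_iff₀ (by positivity) two_pos]
    nlinarith
  have hweight : (1 / (1 + t) + x / (1 - x)) * (x ^ 2 / (1 - x ^ 2)) ≤ 1 / 2 :=
    (mul_le_mul_of_nonneg_right hfactor (by positivity)).trans hhalf
  calc bohrMajorant x t
      = x * (x / (1 - x) + (t + t ^ 2 / (1 + t) +
          (1 - t ^ 2) ^ 2 * ((1 / (1 + t) + x / (1 - x)) * (x ^ 2 / (1 - x ^ 2))))) := by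
        unfold bohrMajorant; ring
    _ ≤ x * (x / (1 - x) + (t + t ^ 2 / (1 + t) + (1 - t ^ 2) ^ 2 * (1 / 2))) := by gcongr
    _ ≤ x * (x / (1 - x) + 3 / 2) := by
        gcongr
        simpa only [mul_one_div] using add_sq_div_one_add_add_le ht0 ht1
    _ = bohrMajorant x 1 := by unfold bohrMajorant; ring

theorem bohrMajorant_one_le_one {x : ℝ} (hx1 : x < 1) (hx : 5 * x ≤ x ^ 2 + 2) :
    bohrMajorant x 1 ≤ 1 := by
  have h1x : 0 < 1 - x := sub_pos.2 hx1
  have hvalue : bohrMajorant x 1 = x * (3 - x) / (2 * (1 - x)) := by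
    unfold bohrMajorant
    field_simp
    ring
  rw [hvalue, div_le_one (by positivity)]
  linarith

theorem IsSchurSeq.tsum_add_mul_tsum_le_one {b : ℕ → ℂ} (hb : IsSchurSeq b) {x : ℝ}
    (hx0 : 0 ≤ x) (hx : x ≤ (5 - Real.sqrt 17) / 2) :
    ∑' n, ‖b n‖ * x ^ (n + 1) +
        (1 / (1 + ‖b 0‖) + x / (1 - x)) * ∑' n, ‖b n‖ ^ 2 * x ^ (2 * n + 1) ≤ 1 := by
  have hsq : Real.sqrt 17 ^ 2 = 17 := Real.sq_sqrt (by norm_num)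
  have hsqrt : 37 / 9 ≤ Real.sqrt 17 := Real.le_sqrt_of_sq_le (by norm_num)
  have hx49 : x ≤ 4 / 9 := by linarith
  have hx1 : x < 1 := by linarith
  have hquad : 5 * x ≤ x ^ 2 + 2 := by nlinarith
  calc _ ≤ bohrMajorant x ‖b 0‖ := hb.tsum_add_mul_tsum_le_bohrMajorant hx0 hx1
    _ ≤ bohrMajorant x 1 :=
      bohrMajorant_le_bohrMajorant_one hx0 hx49 (norm_nonneg _) hb.norm_zero_le_one
    _ ≤ 1 := bohrMajorant_one_le_one hx1 hquad

/-- Corollary 2(B): let `f(z) = ∑_{n=1}^∞ a_{pn} z^{pn}` be a bounded analytic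
self-map of the unit disk with vanishing constant term (here `a n` denotes the
coefficient `a_{pn}`, so `a 1` is `a_p`). Then for `0 ≤ r` with
`r^p ≤ (5-√17)/2`:
`∑_{n=1}^∞ |a_{pn}| r^{pn}
  + (1/(1+|a_p|) + r^p/(1-r^p)) ∑_{n=1}^∞ |a_{pn}|² r^{p(2n-1)} ≤ 1`. -/
theorem stmt13 (p : ℕ) (hp : 0 < p) (f : ℂ → ℂ) (a : ℕ → ℂ)
    (hf : DifferentiableOn ℂ f (Metric.ball 0 1))
    (hb : ∀ z ∈ Metric.ball (0 : ℂ) 1, ‖f z‖ ≤ 1)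
    (hs : ∀ z ∈ Metric.ball (0 : ℂ) 1, HasSum (fun n => a (n + 1) * z ^ (p * (n + 1))) (f z))
    (r : ℝ) (hr0 : 0 ≤ r) (hr : r ^ p ≤ (5 - Real.sqrt 17) / 2) :
    (∑' n : ℕ, ‖a (n + 1)‖ * r ^ (p * (n + 1)))
      + (1 / (1 + ‖a 1‖) + r ^ p / (1 - r ^ p))
        * ∑' n : ℕ, ‖a (n + 1)‖ ^ 2 * r ^ (p * (2 * (n + 1) - 1))
      ≤ 1 := by
  have hupdate : IsSchurSeq (Function.update a 0 0) := by
    refine .of_hasSum_pow_mul hp.ne' fun z hz => ?_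
    have hball : z ∈ Metric.ball (0 : ℂ) 1 := mem_ball_zero_iff.2 hz
    refine ⟨f z, (hasSum_nat_add_iff' 1).1 ?_, hb z hball⟩
    simpa using hs z hball
  have hschur : IsSchurSeq fun n => a (n + 1) := by
    simpa using hupdate.tail (Function.update_self ..)
  have hindex (n : ℕ) : 2 * (n + 1) - 1 = 2 * n + 1 := by lia
  simpa only [← pow_mul, zero_add, hindex] using
    hschur.tsum_add_mul_tsum_le_one (pow_nonneg hr0 p) hr
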